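/- Let M_X, M_Y and D_X be the ℂ-linear endomorphisms of the polynomial ring ℂ[X,Y] given by multiplication by X, multiplication by Y, and the formal partial derivative with respect to X. For a B-diagram G set P(G) = M_X^{h_f↓(G)} ∘ D_X^{h_f↑(G)} ∘ M_Y^{h_c(G)}, and extend P to a ℂ-linear map from ℬ to the endomorphism algebra of ℂ[X,Y]. Then P is a morphism of unital ℂ-algebras: P(u ⋆ v) = P(u) ∘ P(v) for all u, v ∈ ℬ, and P(ε) is the identity. -/

import Mathlib

open scoped BigOperators

structure BD where
  lam : List ℕ
  up : Finset ℕ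
  dn : Finset ℕ
  ed : Finset (ℕ × ℕ)
deriving DecidableEq

namespace BD

/-- number of vertices -/
def nv (G : BD) : ℕ := G.lam.length

/-- number of half-edges -/
def omega (G : BD) : ℕ := G.lam.sum

/-- the vertex to which a half-edge belongs -/
def v (G : BD) (k : ℕ) : ℕ :=
  (List.range G.lam.length).countP (fun i => (G.lam.take i).sum < k)

def Valid (G : BD) : Prop :=
  (∀ x ∈ G.lam, 0 < x) ∧
  G.up ⊆ Finset.Icc 1 G.omega ∧
  G.dn ⊆ Finset.Icc 1 G.omega ∧
  (∀ p ∈ G.ed, p.1 ∈ G.up ∧ p.2 ∈ G.dn ∧ G.v p.1 < G.v p.2) ∧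
  (∀ p ∈ G.ed, ∀ q ∈ G.ed, p.1 = q.1 → p = q) ∧
  (∀ p ∈ G.ed, ∀ q ∈ G.ed, p.2 = q.2 → p = q)

def eps : BD := ⟨[], ∅, ∅, ∅⟩

theorem eps_valid : eps.Valid := by
  refine ⟨?_, ?_, ?_, ?_, ?_, ?_⟩ <;> simp [eps, Valid, omega]

def HfUp (G : BD) : Finset ℕ := G.up \ G.ed.image Prod.fst
def HfDn (G : BD) : Finset ℕ := G.dn \ G.ed.image Prod.snd
def hfUp (G : BD) : ℕ := G.HfUp.card
def hfDn (G : BD) : ℕ := G.HfDn.card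
def hc (G : BD) : ℕ :=
  (G.omega - G.ed.card - G.hfUp) + (G.omega - G.ed.card - G.hfDn)

/-- composition of `G'` over `G` along a matching `s` -/
def comp (G G' : BD) (s : Finset (ℕ × ℕ)) : BD where
  lam := G.lam ++ G'.lam
  up := G.up ∪ G'.up.image (· + G.omega)
  dn := G.dn ∪ G'.dn.image (· + G.omega)
  ed := G.ed ∪ s.image (fun p => (p.1, p.2 + G.omega)) ∪
        G'.ed.image (fun p => (p.1 + G.omega, p.2 + G.omega))

/-- `s` encodes a strictly increasing sequence `a₁ < ⋯ < a_k` of elements of `H_f↑(G)`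
matched with pairwise distinct elements `b₁,…,b_k` of `H_f↓(G')`. -/
def Matching (G G' : BD) (s : Finset (ℕ × ℕ)) : Prop :=
  (∀ p ∈ s, p.1 ∈ G.HfUp ∧ p.2 ∈ G'.HfDn) ∧
  (∀ p ∈ s, ∀ q ∈ s, p.1 = q.1 → p = q) ∧
  (∀ p ∈ s, ∀ q ∈ s, p.2 = q.2 → p = q)

open scoped Classical in
noncomputable def matchings (G G' : BD) : Finset (Finset (ℕ × ℕ)) :=
  (G.HfUp ×ˢ G'.HfDn).powerset.filter (fun s => Matching G G' s)

/-- juxtaposition -/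
def juxt (G G' : BD) : BD := comp G G' ∅

def Indiv (G : BD) : Prop :=
  ∀ G₁ G₂ : BD, G₁.Valid → G₂.Valid → G = juxt G₁ G₂ → G₁ = G ∨ G₂ = G

/-- half-edges attached to the vertices in `I` -/
def HI (G : BD) (I : Finset ℕ) : Finset ℕ :=
  (Finset.Icc 1 G.omega).filter (fun k => G.v k ∈ I)

/-- the increasing relabelling bijection -/
def phi (G : BD) (I : Finset ℕ) (k : ℕ) : ℕ := ((G.HI I).filter (· ≤ k)).card

/-- sub-B-diagram on the set of vertices `I` -/
def sub (G : BD) (I : Finset ℕ) : BD where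
  lam := ((List.range G.lam.length).filter (fun i => i + 1 ∈ I)).map (fun i => G.lam.getD i 0)
  up := (G.up ∩ G.HI I).image (G.phi I)
  dn := (G.dn ∩ G.HI I).image (G.phi I)
  ed := (G.ed.filter (fun p => G.v p.1 ∈ I ∧ G.v p.2 ∈ I)).image
          (fun p => (G.phi I p.1, G.phi I p.2))

def Isolated (G : BD) (I : Finset ℕ) : Prop :=
  ∀ p ∈ G.ed, (G.v p.1 ∈ I ↔ G.v p.2 ∈ I)

def Connected (G : BD) : Prop :=
  ∀ i j : ℕ, 1 ≤ i → i < j → j ≤ G.nv →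
    ∃ (k : ℕ) (c : Fin (k + 1) → ℕ × ℕ),
      (∀ ℓ, c ℓ ∈ G.ed) ∧
      (i = G.v (c 0).1 ∨ i = G.v (c 0).2) ∧
      (j = G.v (c (Fin.last k)).1 ∨ j = G.v (c (Fin.last k)).2) ∧
      ∀ ℓ : Fin k,
        G.v (c ℓ.castSucc).1 = G.v (c ℓ.succ).1 ∨ G.v (c ℓ.castSucc).1 = G.v (c ℓ.succ).2 ∨
        G.v (c ℓ.castSucc).2 = G.v (c ℓ.succ).1 ∨ G.v (c ℓ.castSucc).2 = G.v (c ℓ.succ).2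

def IsConnComp (G : BD) (I : Finset ℕ) : Prop :=
  I ⊆ Finset.Icc 1 G.nv ∧ I.Nonempty ∧ (G.sub I).Connected ∧
  ∀ J : Finset ℕ, I ⊆ J → J ⊆ Finset.Icc 1 G.nv → (G.sub J).Connected → J = I

end BD

open scoped TensorProduct

/-- B-diagrams -/
abbrev BDiagram := {G : BD // G.Valid}

/-- the free `ℂ`-vector space on the set of B-diagrams -/
abbrev BSpace := BDiagram →₀ ℂ

open scoped Classical in
noncomputable def mkB (G : BD) : BSpace :=
  if h : G.Valid then Finsupp.single ⟨G, h⟩ 1 else 0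

noncomputable def unitB : BSpace := Finsupp.single ⟨BD.eps, BD.eps_valid⟩ 1

noncomputable def liftB {V : Type*} [AddCommMonoid V] [Module ℂ V] (f : BDiagram → V) :
    BSpace →ₗ[ℂ] V :=
  Finsupp.lsum ℂ fun A => LinearMap.toSpanSingleton ℂ V (f A)

noncomputable def mulfun (A B : BDiagram) : BSpace :=
  ∑ s ∈ BD.matchings A.1 B.1, mkB (BD.comp A.1 B.1 s)

/-- the product ⋆ of the algebra of B-diagrams, as a bilinear map -/
noncomputable def starB : BSpace →ₗ[ℂ] BSpace →ₗ[ℂ] BSpace :=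
  liftB fun A => liftB fun B => mulfun A B

open scoped Classical in
/-- the coproduct evaluated on a B-diagram -/
noncomputable def dfun (A : BDiagram) : BSpace ⊗[ℂ] BSpace :=
  ∑ I ∈ (Finset.Icc 1 A.1.nv).powerset.filter (fun I => A.1.Isolated I),
    mkB (A.1.sub I) ⊗ₜ[ℂ] mkB (A.1.sub (Finset.Icc 1 A.1.nv \ I))

/-- the coproduct Δ of ℬ -/
noncomputable def deltaL : BSpace →ₗ[ℂ] BSpace ⊗[ℂ] BSpace := liftB dfun

/-- the counit of ℬ -/
noncomputable def counitB : BSpace →ₗ[ℂ] ℂ :=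
  liftB fun A => if A.1 = BD.eps then (1 : ℂ) else 0

/-- multiplication by X on ℂ[X,Y] -/
noncomputable def mX : Module.End ℂ (MvPolynomial (Fin 2) ℂ) :=
  LinearMap.mulLeft ℂ (MvPolynomial.X 0)

/-- multiplication by Y on ℂ[X,Y] -/
noncomputable def mY : Module.End ℂ (MvPolynomial (Fin 2) ℂ) :=
  LinearMap.mulLeft ℂ (MvPolynomial.X 1)

/-- the formal partial derivative ∂/∂X on ℂ[X,Y] -/
noncomputable def dX : Module.End ℂ (MvPolynomial (Fin 2) ℂ) :=
  (MvPolynomial.pderiv 0).toLinearMap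

/-- `P(G) = M_X^{h_f↓(G)} ∘ D_X^{h_f↑(G)} ∘ M_Y^{h_c(G)}` -/
noncomputable def PEnd : BSpace →ₗ[ℂ] Module.End ℂ (MvPolynomial (Fin 2) ℂ) :=
  liftB fun A => mX ^ A.1.hfDn * dX ^ A.1.hfUp * mY ^ A.1.hc

/-!
The half-edges that stay free in a composition of `G'` over `G` are those not used by the matching,
and `hc` is additive, so for a fixed pair of diagrams the theorem is the normal ordering formula
`d ^ m * x ^ n = ∑ s, x ^ (n - #s) * d ^ (m - #s)`, the sum being over the partial matchings `s`
between an `m`-set and an `n`-set. It holds as soon as `d * x = x * d + 1`: when one more factor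
`d` moves to the right past `x ^ n`, either it crosses all the factors `x`, and the new element is
unmatched, or it is contracted with one of them, its partner in the matching.
-/

section PartialMatchings

variable {α β : Type*} [DecidableEq α] [DecidableEq β]

open scoped Classical in
/-- The partial matchings between `U` and `V`, each encoded as its set of matched pairs. They
describe both the ways of composing two B-diagrams and the contractions in a normally ordered
product. -/
noncomputable def partialMatchings (U : Finset α) (V : Finset β) : Finset (Finset (α × β)) :=
  {s ∈ (U ×ˢ V).powerset | Set.InjOn Prod.fst (s : Set (α × β)) ∧
    Set.InjOn Prod.snd (s : Set (α × β))}

theorem mem_partialMatchings {U : Finset α} {V : Finset β} {s : Finset (α × β)} :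
    s ∈ partialMatchings U V ↔ s ⊆ U ×ˢ V ∧ Set.InjOn Prod.fst (s : Set (α × β)) ∧
      Set.InjOn Prod.snd (s : Set (α × β)) := by
  rw [partialMatchings, Finset.mem_filter, Finset.mem_powerset]

theorem partialMatchings_empty_left (V : Finset β) :
    partialMatchings (∅ : Finset α) V = {∅} := by
  ext s
  rw [mem_partialMatchings, Finset.empty_product, Finset.subset_empty, Finset.mem_singleton]
  exact and_iff_left_of_imp fun hs => by simp [hs]

theorem notMem_of_mem_partialMatchings {u : α} {U : Finset α} (hu : u ∉ U) {V : Finset β}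
    {s : Finset (α × β)} (hs : s ∈ partialMatchings U V) (v : β) : (u, v) ∉ s := fun h =>
  hu (Finset.mem_product.1 ((mem_partialMatchings.1 hs).1 h)).1

theorem mem_partialMatchings_insert_of_unmatched {u : α} {U : Finset α} {V : Finset β}
    {s : Finset (α × β)} (hs : u ∉ s.image Prod.fst) :
    s ∈ partialMatchings (insert u U) V ↔ s ∈ partialMatchings U V := by
  have h_sub : s ⊆ insert u U ×ˢ V ↔ s ⊆ U ×ˢ V := by
    simp only [Finset.subset_iff, Finset.mem_product, Finset.mem_insert]
    grind
  rw [mem_partialMatchings, mem_partialMatchings, h_sub]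

theorem insert_mem_partialMatchings_insert {u : α} {U : Finset α} (hu : u ∉ U) {v : β}
    {V : Finset β} {s : Finset (α × β)} (hs : (u, v) ∉ s) :
    insert (u, v) s ∈ partialMatchings (insert u U) V ↔
      v ∈ V ∧ s ∈ partialMatchings U (V.erase v) := by
  simp only [mem_partialMatchings, Finset.coe_insert, Set.injOn_insert (Finset.mem_coe.not.2 hs),
    Finset.subset_iff, Finset.mem_product, Finset.mem_insert, Finset.mem_erase, Set.mem_image,
    Finset.mem_coe]
  grind

theorem filter_unmatched_partialMatchings_insert {u : α} {U : Finset α} (hu : u ∉ U)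
    (V : Finset β) :
    {s ∈ partialMatchings (insert u U) V | u ∉ s.image Prod.fst} = partialMatchings U V := by
  ext s
  rw [Finset.mem_filter]
  constructor
  · rintro ⟨hs, hus⟩
    exact (mem_partialMatchings_insert_of_unmatched hus).1 hs
  · intro hs
    have hus : u ∉ s.image Prod.fst := by
      simpa using notMem_of_mem_partialMatchings hu hs
    exact ⟨(mem_partialMatchings_insert_of_unmatched hus).2 hs, hus⟩

theorem sum_matched_partialMatchings_insert {M : Type*} [AddCommMonoid M] {u : α} {U : Finset α}
    (hu : u ∉ U) (V : Finset β) (f : Finset (α × β) → M) :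
    ∑ s ∈ partialMatchings (insert u U) V with u ∈ s.image Prod.fst, f s =
      ∑ v ∈ V, ∑ s ∈ partialMatchings U (V.erase v), f (insert (u, v) s) := by
  rw [Finset.sum_sigma']
  refine (Finset.sum_bij (fun p _ => insert (u, p.1) p.2) ?_ ?_ ?_ fun _ _ => rfl).symm
  · rintro ⟨v, s⟩ hs
    obtain ⟨hv, hs⟩ := Finset.mem_sigma.1 hs
    have h_notMem := notMem_of_mem_partialMatchings hu hs v
    exact Finset.mem_filter.2 ⟨(insert_mem_partialMatchings_insert hu h_notMem).2 ⟨hv, hs⟩,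
      Finset.mem_image_of_mem Prod.fst (Finset.mem_insert_self (u, v) s)⟩
  · rintro ⟨v, s⟩ hs ⟨w, t⟩ ht (h : insert (u, v) s = insert (u, w) t)
    have hs' : ∀ v, (u, v) ∉ s := notMem_of_mem_partialMatchings hu (Finset.mem_sigma.1 hs).2
    have ht' : ∀ v, (u, v) ∉ t := notMem_of_mem_partialMatchings hu (Finset.mem_sigma.1 ht).2
    obtain rfl : v = w := by
      have h_mem : (u, v) ∈ insert (u, w) t := h ▸ Finset.mem_insert_self (u, v) s
      exact (Prod.ext_iff.1 ((Finset.mem_insert.1 h_mem).resolve_right (ht' v))).2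
    obtain rfl : s = t := by
      rw [← Finset.erase_insert (hs' v), h, Finset.erase_insert (ht' v)]
    rfl
  · intro s hs
    obtain ⟨hs, hus⟩ := Finset.mem_filter.1 hs
    obtain ⟨⟨_, v⟩, huv, rfl⟩ := Finset.mem_image.1 hus
    rw [← Finset.insert_erase huv] at hs
    exact ⟨⟨v, s.erase (_, v)⟩, Finset.mem_sigma.2 <|
      (insert_mem_partialMatchings_insert hu (Finset.notMem_erase _ s)).1 hs,
      Finset.insert_erase huv⟩

theorem sum_partialMatchings_insert {M : Type*} [AddCommMonoid M] {u : α} {U : Finset α}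
    (hu : u ∉ U) (V : Finset β) (f : Finset (α × β) → M) :
    ∑ s ∈ partialMatchings (insert u U) V, f s = ∑ s ∈ partialMatchings U V, f s +
      ∑ v ∈ V, ∑ s ∈ partialMatchings U (V.erase v), f (insert (u, v) s) := by
  rw [← Finset.sum_filter_add_sum_filter_not _ (fun s => u ∉ s.image Prod.fst),
    filter_unmatched_partialMatchings_insert hu]
  simp only [not_not]
  rw [sum_matched_partialMatchings_insert hu]

end PartialMatchings

section NormalOrdering

variable {R : Type*} [Semiring R] {d x : R}

theorem mul_pow_of_mul_eq_mul_add_one (h : d * x = x * d + 1) (n : ℕ) :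
    d * x ^ n = x ^ n * d + n • x ^ (n - 1) := by
  induction n with
  | zero => simp
  | succ n ih =>
    have h_deriv : (n • x ^ (n - 1)) * x = n • x ^ n := by
      cases n with
      | zero => simp
      | succ n => rw [smul_mul_assoc, Nat.add_sub_cancel, pow_succ]
    calc d * x ^ (n + 1) = x ^ n * (d * x) + (n • x ^ (n - 1)) * x := by
          rw [pow_succ, ← mul_assoc, ih, add_mul, mul_assoc]
      _ = x ^ (n + 1) * d + (n + 1) • x ^ n := by
          rw [h, h_deriv, mul_add, mul_one, ← mul_assoc, ← pow_succ, add_assoc, succ_nsmul']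

theorem sum_partialMatchings_pow_mul_pow {α β : Type*} [DecidableEq α] [DecidableEq β]
    (h : d * x = x * d + 1) (U : Finset α) (V : Finset β) :
    ∑ s ∈ partialMatchings U V,
      x ^ (V \ s.image Prod.snd).card * d ^ (U \ s.image Prod.fst).card =
        d ^ U.card * x ^ V.card := by
  induction U using Finset.induction_on generalizing V with
  | empty => simp [partialMatchings_empty_left]
  | insert u U hu ih =>
    have h_unmatched : ∑ s ∈ partialMatchings U V,
        x ^ (V \ s.image Prod.snd).card * d ^ (insert u U \ s.image Prod.fst).card =
          d ^ U.card * x ^ V.card * d := by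
      rw [← ih V, Finset.sum_mul]
      refine Finset.sum_congr rfl fun s hs => ?_
      have hus : u ∉ s.image Prod.fst := by
        simpa using notMem_of_mem_partialMatchings hu hs
      rw [Finset.insert_sdiff_of_notMem _ hus,
        Finset.card_insert_of_notMem fun hu' => hu (Finset.mem_sdiff.1 hu').1, pow_succ, mul_assoc]
    have h_matched : ∀ v ∈ V, ∑ s ∈ partialMatchings U (V.erase v),
        x ^ (V \ (insert (u, v) s).image Prod.snd).card *
          d ^ (insert u U \ (insert (u, v) s).image Prod.fst).card =
            d ^ U.card * x ^ (V.card - 1) := by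
      intro v hv
      rw [← Finset.card_erase_of_mem hv, ← ih (V.erase v)]
      refine Finset.sum_congr rfl fun s _ => ?_
      rw [Finset.image_insert, Finset.image_insert, Finset.insert_sdiff_insert,
        Finset.sdiff_insert_of_notMem hu, Finset.sdiff_insert, Finset.erase_sdiff_comm]
    rw [sum_partialMatchings_insert hu, h_unmatched, Finset.sum_congr rfl h_matched,
      Finset.sum_const, Finset.card_insert_of_notMem hu, pow_succ, mul_assoc, mul_assoc,
      mul_pow_of_mul_eq_mul_add_one h, mul_add, mul_smul_comm]

end NormalOrdering

theorem card_sdiff_image_add_card {α β : Type*} [DecidableEq β] {f : α → β} {s : Finset α}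
    {t : Finset β} (hf : Set.InjOn f s) (hst : ∀ a ∈ s, f a ∈ t) :
    (t \ s.image f).card + s.card = t.card := by
  rw [← Finset.card_image_of_injOn hf,
    Finset.card_sdiff_add_card_eq_card (Finset.image_subset_iff.2 hst)]

section Shift

variable {A B C D : Finset ℕ} {m n : ℕ}

theorem disjoint_image_add_right (hA : ∀ a ∈ A, a ≤ m) (hB : ∀ b ∈ B, 0 < b) :
    Disjoint A (B.image (· + m)) := by
  refine Finset.disjoint_left.2 fun a ha hb => ?_
  obtain ⟨b, hb', rfl⟩ := Finset.mem_image.1 hb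
  exact absurd (hA _ ha) (Nat.not_le.2 (Nat.lt_add_of_pos_left (hB b hb')))

theorem card_union_image_add (hA : ∀ a ∈ A, a ≤ m) (hB : ∀ b ∈ B, 0 < b) :
    (A ∪ B.image (· + m)).card = A.card + B.card := by
  rw [Finset.card_union_of_disjoint (disjoint_image_add_right hA hB),
    Finset.card_image_of_injective _ (add_left_injective m)]

theorem union_image_add_sdiff (hA : ∀ a ∈ A, a ≤ m) (hB : ∀ b ∈ B, 0 < b)
    (hC : ∀ c ∈ C, c ≤ m) (hD : ∀ d ∈ D, 0 < d) :
    (A ∪ B.image (· + m)) \ (C ∪ D.image (· + m)) = (A \ C) ∪ (B \ D).image (· + m) := by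
  rw [Finset.union_sdiff_distrib, Finset.sdiff_union_distrib, Finset.sdiff_union_distrib,
    Finset.sdiff_eq_self_of_disjoint (disjoint_image_add_right hA hD),
    Finset.sdiff_eq_self_of_disjoint (disjoint_image_add_right hC hB).symm,
    Finset.inter_eq_left.2 Finset.sdiff_subset, Finset.inter_eq_right.2 Finset.sdiff_subset,
    Finset.image_sdiff _ _ (add_left_injective m)]

theorem union_image_add_subset_Icc (hA : A ⊆ Finset.Icc 1 m) (hB : B ⊆ Finset.Icc 1 n) :
    A ∪ B.image (· + m) ⊆ Finset.Icc 1 (m + n) := by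
  refine Finset.union_subset (hA.trans (Finset.Icc_subset_Icc_right (Nat.le_add_right m n))) ?_
  refine Finset.image_subset_iff.2 fun b hb => ?_
  have := Finset.mem_Icc.1 (hB hb)
  exact Finset.mem_Icc.2 (by omega)

end Shift

namespace BD

variable {G G' : BD} {s : Finset (ℕ × ℕ)}

namespace Valid

theorem pos_of_mem_up (hG : G.Valid) {a : ℕ} (ha : a ∈ G.up) : 0 < a :=
  (Finset.mem_Icc.1 (hG.2.1 ha)).1

theorem le_omega_of_mem_up (hG : G.Valid) {a : ℕ} (ha : a ∈ G.up) : a ≤ G.omega :=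
  (Finset.mem_Icc.1 (hG.2.1 ha)).2

theorem pos_of_mem_dn (hG : G.Valid) {b : ℕ} (hb : b ∈ G.dn) : 0 < b :=
  (Finset.mem_Icc.1 (hG.2.2.1 hb)).1

theorem le_omega_of_mem_dn (hG : G.Valid) {b : ℕ} (hb : b ∈ G.dn) : b ≤ G.omega :=
  (Finset.mem_Icc.1 (hG.2.2.1 hb)).2

theorem fst_mem_up (hG : G.Valid) {p : ℕ × ℕ} (hp : p ∈ G.ed) : p.1 ∈ G.up :=
  (hG.2.2.2.1 p hp).1

theorem snd_mem_dn (hG : G.Valid) {p : ℕ × ℕ} (hp : p ∈ G.ed) : p.2 ∈ G.dn :=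
  (hG.2.2.2.1 p hp).2.1

theorem v_fst_lt_v_snd (hG : G.Valid) {p : ℕ × ℕ} (hp : p ∈ G.ed) : G.v p.1 < G.v p.2 :=
  (hG.2.2.2.1 p hp).2.2

theorem injOn_fst (hG : G.Valid) : Set.InjOn Prod.fst (G.ed : Set (ℕ × ℕ)) :=
  fun p hp q hq => hG.2.2.2.2.1 p hp q hq

theorem injOn_snd (hG : G.Valid) : Set.InjOn Prod.snd (G.ed : Set (ℕ × ℕ)) :=
  fun p hp q hq => hG.2.2.2.2.2 p hp q hq

theorem hfUp_add_card_ed (hG : G.Valid) : G.hfUp + G.ed.card = G.up.card :=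
  card_sdiff_image_add_card hG.injOn_fst fun _ => hG.fst_mem_up

theorem hfDn_add_card_ed (hG : G.Valid) : G.hfDn + G.ed.card = G.dn.card :=
  card_sdiff_image_add_card hG.injOn_snd fun _ => hG.snd_mem_dn

theorem card_up_le_omega (hG : G.Valid) : G.up.card ≤ G.omega := by
  simpa using Finset.card_le_card hG.2.1

theorem card_dn_le_omega (hG : G.Valid) : G.dn.card ≤ G.omega := by
  simpa using Finset.card_le_card hG.2.2.1

theorem hc_eq (hG : G.Valid) : G.hc = (G.omega - G.up.card) + (G.omega - G.dn.card) := by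
  rw [hc, Nat.sub_sub, Nat.sub_sub, ← hG.hfUp_add_card_ed, ← hG.hfDn_add_card_ed,
    Nat.add_comm G.hfUp, Nat.add_comm G.hfDn]

end Valid

theorem v_zero (G : BD) : G.v 0 = 0 := by
  simp [v]

theorem v_le_nv (G : BD) (k : ℕ) : G.v k ≤ G.nv :=
  List.countP_le_length.trans_eq List.length_range

theorem v_eq_nv_of_omega_lt {k : ℕ} (hk : G.omega < k) : G.v k = G.nv := by
  have h_all : ∀ i ∈ List.range G.lam.length, decide ((G.lam.take i).sum < k) = true :=
    fun i _ => decide_eq_true ((G.lam.take_sublist i).sum_le_sum (by simp) |>.trans_lt hk)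
  exact (List.countP_eq_length.2 h_all).trans List.length_range

theorem v_pos {k : ℕ} (hk : 0 < k) (hk' : k ≤ G.omega) : 0 < G.v k := by
  have h_len : 0 < G.lam.length := by
    refine List.length_pos_of_ne_nil fun h => ?_
    rw [omega, h, List.sum_nil] at hk'
    omega
  refine List.countP_pos_iff.2 ⟨0, List.mem_range.2 h_len, decide_eq_true ?_⟩
  rwa [List.take_zero, List.sum_nil]

theorem omega_comp (G G' : BD) (s : Finset (ℕ × ℕ)) :
    (G.comp G' s).omega = G.omega + G'.omega :=
  List.sum_append

theorem v_comp (G G' : BD) (s : Finset (ℕ × ℕ)) (k : ℕ) :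
    (G.comp G' s).v k = G.v k + G'.v (k - G.omega) := by
  rw [v, v, v, comp, List.length_append, List.range_add, List.countP_append, List.countP_map]
  congr 1 <;> refine List.countP_congr fun i hi => ?_
  · rw [List.take_append_of_le_length (List.mem_range.1 hi).le]
  · simp only [Function.comp_apply, decide_eq_true_eq, List.take_length_add_append,
      List.sum_append, omega]
    exact Nat.lt_sub_iff_add_lt'.symm.trans decide_eq_true_iff.symm

theorem v_comp_of_le_omega (G' : BD) (s : Finset (ℕ × ℕ)) {k : ℕ} (hk : k ≤ G.omega) :
    (G.comp G' s).v k = G.v k := by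
  rw [v_comp, Nat.sub_eq_zero_of_le hk, v_zero, Nat.add_zero]

theorem v_comp_add_omega (G G' : BD) (s : Finset (ℕ × ℕ)) {k : ℕ} (hk : 0 < k) :
    (G.comp G' s).v (k + G.omega) = G.nv + G'.v k := by
  rw [v_comp, v_eq_nv_of_omega_lt (Nat.lt_add_of_pos_left hk), Nat.add_sub_cancel]

theorem mem_matchings : s ∈ matchings G G' ↔ Matching G G' s := by
  classical
  unfold matchings
  rw [Finset.mem_filter, Finset.mem_powerset]
  exact and_iff_right_of_imp fun hs p hp => Finset.mem_product.2 (hs.1 p hp)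

theorem matchings_eq_partialMatchings (G G' : BD) :
    matchings G G' = partialMatchings G.HfUp G'.HfDn := by
  ext s
  simp only [mem_matchings, Matching, mem_partialMatchings, Finset.subset_iff,
    Finset.mem_product, Set.InjOn, Finset.mem_coe]

theorem HfUp_subset_up (G : BD) : G.HfUp ⊆ G.up :=
  Finset.sdiff_subset

theorem HfDn_subset_dn (G : BD) : G.HfDn ⊆ G.dn :=
  Finset.sdiff_subset

theorem Matching.fst_mem_up (hs : Matching G G' s) {p : ℕ × ℕ} (hp : p ∈ s) : p.1 ∈ G.up :=
  HfUp_subset_up G (hs.1 p hp).1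

theorem Matching.snd_mem_dn (hs : Matching G G' s) {p : ℕ × ℕ} (hp : p ∈ s) : p.2 ∈ G'.dn :=
  HfDn_subset_dn G' (hs.1 p hp).2

theorem Matching.fst_ne_fst (hs : Matching G G' s) {p q : ℕ × ℕ} (hp : p ∈ s) (hq : q ∈ G.ed) :
    p.1 ≠ q.1 := fun h =>
  (Finset.mem_sdiff.1 (hs.1 p hp).1).2 (h ▸ Finset.mem_image_of_mem Prod.fst hq)

theorem Matching.snd_ne_snd (hs : Matching G G' s) {p q : ℕ × ℕ} (hp : p ∈ s) (hq : q ∈ G'.ed) :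
    p.2 ≠ q.2 := fun h =>
  (Finset.mem_sdiff.1 (hs.1 p hp).2).2 (h ▸ Finset.mem_image_of_mem Prod.snd hq)

theorem mem_ed_comp {p : ℕ × ℕ} : p ∈ (G.comp G' s).ed ↔ p ∈ G.ed ∨
    (∃ q ∈ s, p = (q.1, q.2 + G.omega)) ∨
      ∃ q ∈ G'.ed, p = (q.1 + G.omega, q.2 + G.omega) := by
  simp only [comp, Finset.mem_union, Finset.mem_image, or_assoc, eq_comm (a := p)]

theorem image_fst_ed_comp (G G' : BD) (s : Finset (ℕ × ℕ)) :
    (G.comp G' s).ed.image Prod.fst =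
      (G.ed.image Prod.fst ∪ s.image Prod.fst) ∪
        (G'.ed.image Prod.fst).image (· + G.omega) := by
  simp only [comp, Finset.image_union, Finset.image_image, Function.comp_def]

theorem image_snd_ed_comp (G G' : BD) (s : Finset (ℕ × ℕ)) :
    (G.comp G' s).ed.image Prod.snd =
      G.ed.image Prod.snd ∪
        (G'.ed.image Prod.snd ∪ s.image Prod.snd).image (· + G.omega) := by
  rw [Finset.union_comm (G'.ed.image Prod.snd)]
  simp only [comp, Finset.image_union, Finset.image_image, Function.comp_def, Finset.union_assoc]

theorem injOn_fst_ed_comp (hG : G.Valid) (hG' : G'.Valid) (hs : Matching G G' s) :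
    Set.InjOn Prod.fst ((G.comp G' s).ed : Set (ℕ × ℕ)) := by
  have h_le : ∀ p ∈ G.ed, p.1 ≤ G.omega := fun p hp => hG.le_omega_of_mem_up (hG.fst_mem_up hp)
  have h_le_s : ∀ p ∈ s, p.1 ≤ G.omega := fun p hp => hG.le_omega_of_mem_up (hs.fst_mem_up hp)
  have h_pos : ∀ p ∈ G'.ed, 0 < p.1 := fun p hp => hG'.pos_of_mem_up (hG'.fst_mem_up hp)
  have h_ne : ∀ p ∈ s, ∀ q ∈ G.ed, p.1 ≠ q.1 := fun p hp q hq => hs.fst_ne_fst hp hq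
  have h_inj : ∀ p ∈ G.ed, ∀ q ∈ G.ed, p.1 = q.1 → p = q :=
    fun p hp q hq => hG.injOn_fst hp hq
  have h_inj' : ∀ p ∈ G'.ed, ∀ q ∈ G'.ed, p.1 = q.1 → p = q :=
    fun p hp q hq => hG'.injOn_fst hp hq
  have h_inj_s := hs.2.1
  intro p hp q hq h
  simp only [Finset.mem_coe, mem_ed_comp] at hp hq
  grind

theorem injOn_snd_ed_comp (hG : G.Valid) (hG' : G'.Valid) (hs : Matching G G' s) :
    Set.InjOn Prod.snd ((G.comp G' s).ed : Set (ℕ × ℕ)) := by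
  have h_le : ∀ p ∈ G.ed, p.2 ≤ G.omega := fun p hp => hG.le_omega_of_mem_dn (hG.snd_mem_dn hp)
  have h_pos_s : ∀ p ∈ s, 0 < p.2 := fun p hp => hG'.pos_of_mem_dn (hs.snd_mem_dn hp)
  have h_pos : ∀ p ∈ G'.ed, 0 < p.2 := fun p hp => hG'.pos_of_mem_dn (hG'.snd_mem_dn hp)
  have h_ne : ∀ p ∈ s, ∀ q ∈ G'.ed, p.2 ≠ q.2 := fun p hp q hq => hs.snd_ne_snd hp hq
  have h_inj : ∀ p ∈ G.ed, ∀ q ∈ G.ed, p.2 = q.2 → p = q :=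
    fun p hp q hq => hG.injOn_snd hp hq
  have h_inj' : ∀ p ∈ G'.ed, ∀ q ∈ G'.ed, p.2 = q.2 → p = q :=
    fun p hp q hq => hG'.injOn_snd hp hq
  have h_inj_s := hs.2.2
  intro p hp q hq h
  simp only [Finset.mem_coe, mem_ed_comp] at hp hq
  grind

theorem mem_up_and_mem_dn_and_v_lt_of_mem_ed_comp (hG : G.Valid) (hG' : G'.Valid)
    (hs : Matching G G' s) {p : ℕ × ℕ} (hp : p ∈ (G.comp G' s).ed) :
    p.1 ∈ (G.comp G' s).up ∧ p.2 ∈ (G.comp G' s).dn ∧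
      (G.comp G' s).v p.1 < (G.comp G' s).v p.2 := by
  rcases mem_ed_comp.1 hp with hp | ⟨q, hq, rfl⟩ | ⟨q, hq, rfl⟩
  · have h_up := hG.fst_mem_up hp
    have h_dn := hG.snd_mem_dn hp
    refine ⟨Finset.mem_union_left _ h_up, Finset.mem_union_left _ h_dn, ?_⟩
    rw [v_comp_of_le_omega G' s (hG.le_omega_of_mem_up h_up),
      v_comp_of_le_omega G' s (hG.le_omega_of_mem_dn h_dn)]
    exact hG.v_fst_lt_v_snd hp
  · have h_up := hs.fst_mem_up hq
    have h_dn := hs.snd_mem_dn hq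
    refine ⟨Finset.mem_union_left _ h_up,
      Finset.mem_union_right _ (Finset.mem_image_of_mem _ h_dn), ?_⟩
    rw [v_comp_of_le_omega G' s (hG.le_omega_of_mem_up h_up),
      v_comp_add_omega G G' s (hG'.pos_of_mem_dn h_dn)]
    exact (G.v_le_nv q.1).trans_lt (Nat.lt_add_of_pos_right
      (v_pos (hG'.pos_of_mem_dn h_dn) (hG'.le_omega_of_mem_dn h_dn)))
  · have h_up := hG'.fst_mem_up hq
    have h_dn := hG'.snd_mem_dn hq
    refine ⟨Finset.mem_union_right _ (Finset.mem_image_of_mem _ h_up),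
      Finset.mem_union_right _ (Finset.mem_image_of_mem _ h_dn), ?_⟩
    rw [v_comp_add_omega G G' s (hG'.pos_of_mem_up h_up),
      v_comp_add_omega G G' s (hG'.pos_of_mem_dn h_dn)]
    exact Nat.add_lt_add_left (hG'.v_fst_lt_v_snd hq) _

theorem Valid.comp (hG : G.Valid) (hG' : G'.Valid) (hs : Matching G G' s) :
    (G.comp G' s).Valid := by
  refine ⟨fun x hx => (List.mem_append.1 hx).elim (hG.1 x) (hG'.1 x), ?_, ?_,
    fun p hp => mem_up_and_mem_dn_and_v_lt_of_mem_ed_comp hG hG' hs hp,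
    fun p hp q hq => injOn_fst_ed_comp hG hG' hs hp hq,
    fun p hp q hq => injOn_snd_ed_comp hG hG' hs hp hq⟩
  · rw [omega_comp]
    exact union_image_add_subset_Icc hG.2.1 hG'.2.1
  · rw [omega_comp]
    exact union_image_add_subset_Icc hG.2.2.1 hG'.2.2.1

theorem HfUp_comp (hG : G.Valid) (hG' : G'.Valid) (hs : Matching G G' s) :
    (G.comp G' s).HfUp = (G.HfUp \ s.image Prod.fst) ∪ G'.HfUp.image (· + G.omega) := by
  have h_used : ∀ a ∈ G.ed.image Prod.fst ∪ s.image Prod.fst, a ≤ G.omega := by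
    rw [← Finset.image_union]
    refine Finset.forall_mem_image.2 fun p hp => hG.le_omega_of_mem_up ?_
    exact (Finset.mem_union.1 hp).elim hG.fst_mem_up hs.fst_mem_up
  have h_pos : ∀ a ∈ G'.ed.image Prod.fst, 0 < a :=
    Finset.forall_mem_image.2 fun p hp => hG'.pos_of_mem_up (hG'.fst_mem_up hp)
  rw [HfUp, image_fst_ed_comp, HfUp, HfUp, sdiff_sdiff]
  exact union_image_add_sdiff (fun _ => hG.le_omega_of_mem_up) (fun _ => hG'.pos_of_mem_up)
    h_used h_pos

theorem HfDn_comp (hG : G.Valid) (hG' : G'.Valid) (hs : Matching G G' s) :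
    (G.comp G' s).HfDn = G.HfDn ∪ (G'.HfDn \ s.image Prod.snd).image (· + G.omega) := by
  have h_le : ∀ b ∈ G.ed.image Prod.snd, b ≤ G.omega :=
    Finset.forall_mem_image.2 fun p hp => hG.le_omega_of_mem_dn (hG.snd_mem_dn hp)
  have h_used : ∀ b ∈ G'.ed.image Prod.snd ∪ s.image Prod.snd, 0 < b := by
    rw [← Finset.image_union]
    refine Finset.forall_mem_image.2 fun p hp => hG'.pos_of_mem_dn ?_
    exact (Finset.mem_union.1 hp).elim hG'.snd_mem_dn hs.snd_mem_dn
  rw [HfDn, image_snd_ed_comp, HfDn, HfDn, sdiff_sdiff]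
  exact union_image_add_sdiff (fun _ => hG.le_omega_of_mem_dn) (fun _ => hG'.pos_of_mem_dn)
    h_le h_used

theorem hfUp_comp (hG : G.Valid) (hG' : G'.Valid) (hs : Matching G G' s) :
    (G.comp G' s).hfUp = (G.HfUp \ s.image Prod.fst).card + G'.hfUp := by
  rw [hfUp, HfUp_comp hG hG' hs, hfUp]
  refine card_union_image_add (fun a ha => ?_) fun a ha => ?_
  · exact hG.le_omega_of_mem_up (HfUp_subset_up G (Finset.sdiff_subset ha))
  · exact hG'.pos_of_mem_up (HfUp_subset_up G' ha)

theorem hfDn_comp (hG : G.Valid) (hG' : G'.Valid) (hs : Matching G G' s) :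
    (G.comp G' s).hfDn = G.hfDn + (G'.HfDn \ s.image Prod.snd).card := by
  rw [hfDn, HfDn_comp hG hG' hs, hfDn]
  refine card_union_image_add (fun b hb => ?_) fun b hb => ?_
  · exact hG.le_omega_of_mem_dn (HfDn_subset_dn G hb)
  · exact hG'.pos_of_mem_dn (HfDn_subset_dn G' (Finset.sdiff_subset hb))

theorem hc_comp (hG : G.Valid) (hG' : G'.Valid) (hs : Matching G G' s) :
    (G.comp G' s).hc = G.hc + G'.hc := by
  have h_up : (G.comp G' s).up.card = G.up.card + G'.up.card :=
    card_union_image_add (fun _ => hG.le_omega_of_mem_up) fun _ => hG'.pos_of_mem_up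
  have h_dn : (G.comp G' s).dn.card = G.dn.card + G'.dn.card :=
    card_union_image_add (fun _ => hG.le_omega_of_mem_dn) fun _ => hG'.pos_of_mem_dn
  have := hG.card_up_le_omega
  have := hG'.card_up_le_omega
  have := hG.card_dn_le_omega
  have := hG'.card_dn_le_omega
  rw [(hG.comp hG' hs).hc_eq, hG.hc_eq, hG'.hc_eq, omega_comp, h_up, h_dn]
  omega

end BD

theorem liftB_single {V : Type*} [AddCommMonoid V] [Module ℂ V] (f : BDiagram → V)
    (G : BDiagram) : liftB f (Finsupp.single G 1) = f G := by
  rw [liftB, Finsupp.lsum_single, LinearMap.toSpanSingleton_apply_one]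

section WeylAlgebra

variable {R : Type*} [Semiring R] [Algebra ℂ R]

theorem map_starB_of_map_mulfun (f : BSpace →ₗ[ℂ] R)
    (hf : ∀ G G' : BDiagram, f (mulfun G G') = f (Finsupp.single G 1) * f (Finsupp.single G' 1))
    (u v : BSpace) : f (starB u v) = f u * f v := by
  have h_bilin : starB.compr₂ f = (LinearMap.mul ℂ R).compl₁₂ f f := by
    refine Finsupp.lhom_ext' fun G => LinearMap.ext_ring ?_
    refine Finsupp.lhom_ext' fun G' => LinearMap.ext_ring ?_
    simpa only [LinearMap.comp_apply, LinearMap.compr₂_apply, LinearMap.compl₁₂_apply,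
      Finsupp.lsingle_apply, LinearMap.mul_apply', starB, liftB_single] using hf G G'
  exact LinearMap.congr_fun (LinearMap.congr_fun h_bilin u) v

/-- The linear extension of `G ↦ x ^ hfDn G * d ^ hfUp G * y ^ hc G` with values in an arbitrary
algebra, through which `PEnd` is studied: it is the case `x = mX`, `d = dX`, `y = mY`. -/
noncomputable def normalOrderedMap (x d y : R) : BSpace →ₗ[ℂ] R :=
  liftB fun G => x ^ G.1.hfDn * d ^ G.1.hfUp * y ^ G.1.hc

theorem normalOrderedMap_single (x d y : R) (G : BDiagram) :
    normalOrderedMap x d y (Finsupp.single G 1) =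
      x ^ G.1.hfDn * d ^ G.1.hfUp * y ^ G.1.hc :=
  liftB_single _ G

theorem normalOrderedMap_mkB_comp (x d y : R) (G G' : BDiagram) {s : Finset (ℕ × ℕ)}
    (hs : BD.Matching G.1 G'.1 s) :
    normalOrderedMap x d y (mkB (BD.comp G.1 G'.1 s)) =
      x ^ G.1.hfDn *
        (x ^ (G'.1.HfDn \ s.image Prod.snd).card * d ^ (G.1.HfUp \ s.image Prod.fst).card) *
          (d ^ G'.1.hfUp * y ^ (G.1.hc + G'.1.hc)) := by
  rw [mkB, dif_pos (G.2.comp G'.2 hs), normalOrderedMap_single, BD.hfDn_comp G.2 G'.2 hs,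
    BD.hfUp_comp G.2 G'.2 hs, BD.hc_comp G.2 G'.2 hs, pow_add x, pow_add d]
  simp only [mul_assoc]

theorem normalOrderedMap_mulfun {x d y : R} (hdx : d * x = x * d + 1) (hyx : Commute y x)
    (hyd : Commute y d) (G G' : BDiagram) :
    normalOrderedMap x d y (mulfun G G') =
      normalOrderedMap x d y (Finsupp.single G 1) *
        normalOrderedMap x d y (Finsupp.single G' 1) := by
  have h_comm : Commute (y ^ G.1.hc) (x ^ G'.1.hfDn * d ^ G'.1.hfUp) :=
    (hyx.pow_pow _ _).mul_right (hyd.pow_pow _ _)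
  calc normalOrderedMap x d y (mulfun G G')
    _ = x ^ G.1.hfDn * (∑ s ∈ BD.matchings G.1 G'.1,
          x ^ (G'.1.HfDn \ s.image Prod.snd).card * d ^ (G.1.HfUp \ s.image Prod.fst).card) *
            (d ^ G'.1.hfUp * y ^ (G.1.hc + G'.1.hc)) := by
      rw [mulfun, map_sum, Finset.mul_sum, Finset.sum_mul]
      exact Finset.sum_congr rfl fun s hs =>
        normalOrderedMap_mkB_comp x d y G G' (BD.mem_matchings.1 hs)
    _ = x ^ G.1.hfDn * (d ^ G.1.hfUp * x ^ G'.1.hfDn) *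
          (d ^ G'.1.hfUp * y ^ (G.1.hc + G'.1.hc)) := by
      rw [BD.matchings_eq_partialMatchings, sum_partialMatchings_pow_mul_pow hdx, ← BD.hfUp,
        ← BD.hfDn]
    _ = x ^ G.1.hfDn * d ^ G.1.hfUp * (x ^ G'.1.hfDn * d ^ G'.1.hfUp * y ^ G.1.hc) *
          y ^ G'.1.hc := by
      simp only [pow_add, mul_assoc]
    _ = (x ^ G.1.hfDn * d ^ G.1.hfUp * y ^ G.1.hc) *
          (x ^ G'.1.hfDn * d ^ G'.1.hfUp * y ^ G'.1.hc) := by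
      rw [← h_comm.eq]
      simp only [mul_assoc]
    _ = normalOrderedMap x d y (Finsupp.single G 1) *
          normalOrderedMap x d y (Finsupp.single G' 1) := by
      rw [normalOrderedMap_single, normalOrderedMap_single]

theorem normalOrderedMap_unitB (x d y : R) : normalOrderedMap x d y unitB = 1 := by
  rw [unitB, normalOrderedMap_single]
  simp [BD.eps, BD.hfDn, BD.hfUp, BD.hc, BD.HfDn, BD.HfUp, BD.omega]

theorem PEnd_algebra_morphism_general {x d y : R} (hdx : d * x = x * d + 1)
    (hyx : Commute y x) (hyd : Commute y d) :
    (∀ u v : BSpace, normalOrderedMap x d y (starB u v) =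
      normalOrderedMap x d y u * normalOrderedMap x d y v) ∧ normalOrderedMap x d y unitB = 1 :=
  ⟨map_starB_of_map_mulfun _ (normalOrderedMap_mulfun hdx hyx hyd), normalOrderedMap_unitB x d y⟩

end WeylAlgebra

theorem derivation_mul_mulLeft {R A : Type*} [CommSemiring R] [CommSemiring A] [Algebra R A]
    (D : Derivation R A A) (a : A) :
    D.toLinearMap * LinearMap.mulLeft R a =
      LinearMap.mulLeft R a * D.toLinearMap + LinearMap.mulLeft R (D a) :=
  LinearMap.ext fun b => (D.leibniz a b).trans (by simp [mul_comm b])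

theorem dX_mul_mX : dX * mX = mX * dX + 1 := by
  rw [dX, mX, derivation_mul_mulLeft, MvPolynomial.pderiv_X_self, LinearMap.mulLeft_one]
  rfl

theorem commute_mY_mX : Commute mY mX :=
  (Commute.all (MvPolynomial.X 1) (MvPolynomial.X 0)).map (Algebra.lmul ℂ (MvPolynomial (Fin 2) ℂ))

theorem commute_mY_dX : Commute mY dX := by
  have h : MvPolynomial.pderiv (R := ℂ) (0 : Fin 2) (MvPolynomial.X 1) = 0 :=
    MvPolynomial.pderiv_X_of_ne (by decide)
  rw [commute_iff_eq, mY, dX, derivation_mul_mulLeft, h, LinearMap.mulLeft_zero_eq_zero, add_zero]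

/-- the linear extension of `G ↦ M_X^{h_f↓(G)} ∘ D_X^{h_f↑(G)} ∘ M_Y^{h_c(G)}`
is a morphism of unital `ℂ`-algebras from `(ℬ, ⋆)` to the endomorphisms of ℂ[X,Y]. -/
theorem PEnd_algebra_morphism :
    (∀ u v : BSpace, PEnd (starB u v) = PEnd u * PEnd v) ∧ PEnd unitB = 1 :=
  PEnd_algebra_morphism_general dX_mul_mX commute_mY_mX commute_mY_dX
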